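/- Suppose (P) has a KKT point (Assumption 1). Fix μ > 0, ȳ ∈ ℝ^m and ξ ≥ 0. If x̄ ∈ χ satisfies L_μ(x̄, ȳ) ≤ g_μ(ȳ) + ξ, then μ·‖(Π_K(Ax̄ − b − ȳ/μ) − (Ax̄ − b)) − ∇g_μ(ȳ)‖₂² ≤ 2ξ, where Π_K(Ax̄ − b − ȳ/μ) − (Ax̄ − b) is the gradient of y ↦ L_μ(x̄, y) at ȳ and ∇g_μ(ȳ) denotes the gradient of g_μ at ȳ (which exists by Theorem 1 under Assumption 1). -/

import Mathlib

open RealInnerProductSpace Metric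

/-- The dual cone `K* = {y : ⟪y, s⟫ ≥ 0 for all s ∈ K}`. -/
def dualCone {m : ℕ} (K : Set (EuclideanSpace ℝ (Fin m))) :
    Set (EuclideanSpace ℝ (Fin m)) :=
  {y | ∀ s ∈ K, 0 ≤ ⟪y, s⟫}

/-- The penalty Lagrangian
`L_μ(x, y) = p(x) + (μ/2)·d_K(Ax - b - y/μ)² - ‖y‖²/(2μ)`. -/
noncomputable def Lpen {n m : ℕ}
    (A : EuclideanSpace ℝ (Fin n) →L[ℝ] EuclideanSpace ℝ (Fin m))
    (b : EuclideanSpace ℝ (Fin m)) (K : Set (EuclideanSpace ℝ (Fin m)))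
    (p : EuclideanSpace ℝ (Fin n) → ℝ) (μ : ℝ)
    (x : EuclideanSpace ℝ (Fin n)) (y : EuclideanSpace ℝ (Fin m)) : ℝ :=
  p x + μ / 2 * (infDist (A x - b - μ⁻¹ • y) K) ^ 2 - ‖y‖ ^ 2 / (2 * μ)

/-- `g_μ(y) = inf_{x ∈ χ} L_μ(x, y)`. -/
noncomputable def gmu {n m : ℕ}
    (A : EuclideanSpace ℝ (Fin n) →L[ℝ] EuclideanSpace ℝ (Fin m))
    (b : EuclideanSpace ℝ (Fin m)) (K : Set (EuclideanSpace ℝ (Fin m)))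
    (χ : Set (EuclideanSpace ℝ (Fin n)))
    (p : EuclideanSpace ℝ (Fin n) → ℝ) (μ : ℝ) (y : EuclideanSpace ℝ (Fin m)) : ℝ :=
  sInf ((fun x => Lpen A b K p μ x y) '' χ)

/-- The Lagrangian dual function `g₀(z) = inf_{x ∈ χ} { p(x) - ⟪z, Ax - b⟫ }`. -/
noncomputable def gzero {n m : ℕ}
    (A : EuclideanSpace ℝ (Fin n) →L[ℝ] EuclideanSpace ℝ (Fin m))
    (b : EuclideanSpace ℝ (Fin m)) (χ : Set (EuclideanSpace ℝ (Fin n)))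
    (p : EuclideanSpace ℝ (Fin n) → ℝ) (z : EuclideanSpace ℝ (Fin m)) : ℝ :=
  sInf ((fun x => p x - ⟪z, A x - b⟫) '' χ)

/-- The optimal value `p* = inf { p(x) : x ∈ χ, Ax - b ∈ K }` of the conic program (P). -/
noncomputable def pstar {n m : ℕ}
    (A : EuclideanSpace ℝ (Fin n) →L[ℝ] EuclideanSpace ℝ (Fin m))
    (b : EuclideanSpace ℝ (Fin m)) (K : Set (EuclideanSpace ℝ (Fin m)))
    (χ : Set (EuclideanSpace ℝ (Fin n)))
    (p : EuclideanSpace ℝ (Fin n) → ℝ) : ℝ :=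
  sInf (p '' {x ∈ χ | A x - b ∈ K})

/-!
Write `L = L_μ`, `g = g_μ` and `r = Π_K(Ax̄ - b - ȳ/μ) - (Ax̄ - b)`.

Holding the point of `K` fixed while `y` varies and completing the square shows that `L(x̄, ·)` lies
below the affine function through `(ȳ, L(x̄, ȳ))` with slope `r`; as `g ≤ L(x̄, ·)` and `x̄` is
`ξ`-optimal, `g(z) ≤ g(ȳ) + ⟪r, z - ȳ⟫ + ξ` for all `z`. On the other hand `L(x, y) + ‖y‖²/(2μ)` is
jointly convex, so its infimum `g + ‖·‖²/(2μ)` over `x` is convex, and the gradient inequality for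
it reads `g(z) ≥ g(ȳ) + ⟪∇g(ȳ), z - ȳ⟫ - ‖z - ȳ‖²/(2μ)`. Comparing the two bounds at
`z = ȳ - μ(r - ∇g(ȳ))` gives the claim, without any minimizer of `L(·, ȳ)`.
-/

section Convexity

theorem convexOn_sInf_image_left {E F : Type*} [AddCommGroup E] [Module ℝ E] [AddCommGroup F]
    [Module ℝ F] {s : Set E} {t : Set F} {φ : E → F → ℝ}
    (hφ : ConvexOn ℝ (s ×ˢ t) fun q => φ q.1 q.2) (hs : s.Nonempty)
    (hbdd : ∀ y ∈ t, BddBelow ((fun x => φ x y) '' s)) :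
    ConvexOn ℝ t fun y => sInf ((fun x => φ x y) '' s) := by
  have ⟨x, hx⟩ := hs
  have ht : Convex ℝ t := fun y hy z hz a c ha hc hac =>
    (hφ.1 (Set.mk_mem_prod hx hy) (Set.mk_mem_prod hx hz) ha hc hac).2
  refine ⟨ht, fun y hy z hz a c ha hc hac => le_of_forall_pos_le_add fun ε hε => ?_⟩
  obtain ⟨_, ⟨u, hu, rfl⟩, hu_lt⟩ := Real.lt_sInf_add_pos (hs.image fun x => φ x y) hε
  obtain ⟨_, ⟨v, hv, rfl⟩, hv_lt⟩ := Real.lt_sInf_add_pos (hs.image fun x => φ x z) hε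
  have hmem : (a • u + c • v, a • y + c • z) ∈ s ×ˢ t :=
    hφ.1 (Set.mk_mem_prod hu hy) (Set.mk_mem_prod hv hz) ha hc hac
  calc sInf ((fun x => φ x (a • y + c • z)) '' s)
      ≤ φ (a • u + c • v) (a • y + c • z) := csInf_le (hbdd _ hmem.2) ⟨_, hmem.1, rfl⟩
    _ ≤ a * φ u y + c * φ v z :=
        hφ.2 (Set.mk_mem_prod hu hy) (Set.mk_mem_prod hv hz) ha hc hac
    _ ≤ a * (sInf ((fun x => φ x y) '' s) + ε) + c * (sInf ((fun x => φ x z) '' s) + ε) := by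
        gcongr
    _ = a • sInf ((fun x => φ x y) '' s) + c • sInf ((fun x => φ x z) '' s) + ε := by
        simp only [smul_eq_mul]
        linear_combination ε * hac

theorem convexOn_univ_infDist {F : Type*} [SeminormedAddCommGroup F] [NormedSpace ℝ F] {K : Set F}
    (hK : Convex ℝ K) : ConvexOn ℝ Set.univ fun v => infDist v K := by
  rcases K.eq_empty_or_nonempty with rfl | hne
  · simpa only [infDist_empty] using convexOn_const (0 : ℝ) convex_univ
  have hdist : ConvexOn ℝ (K ×ˢ Set.univ) fun q : F × F => dist q.2 q.1 := by
    simp only [dist_eq_norm]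
    exact (convexOn_univ_norm.comp_linearMap
      (LinearMap.snd ℝ F F - LinearMap.fst ℝ F F)).subset (Set.subset_univ _)
        (hK.prod convex_univ)
  have hbdd (v : F) : BddBelow ((fun s => dist v s) '' K) :=
    ⟨0, Set.forall_mem_image.2 fun _ _ => dist_nonneg⟩
  simpa only [infDist_eq_iInf, ← sInf_image'] using
    convexOn_sInf_image_left hdist hne fun v _ => hbdd v

theorem add_fderiv_sub_le_of_convexOn {F : Type*} [NormedAddCommGroup F] [NormedSpace ℝ F]
    {s : Set F} {f : F → ℝ} {f' : F →L[ℝ] ℝ} {y z : F} (hf : ConvexOn ℝ s f) (hy : y ∈ s)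
    (hz : z ∈ s) (hf' : HasFDerivAt f f' y) : f y + f' (z - y) ≤ f z := by
  let ℓ : ℝ →ᵃ[ℝ] F := AffineMap.lineMap y z
  have hderiv : HasDerivAt (f ∘ ℓ) (f' (z - y)) 0 := by
    refine HasFDerivAt.comp_hasDerivAt 0 ?_ AffineMap.hasDerivAt_lineMap
    simpa only [ℓ, AffineMap.lineMap_apply_zero] using hf'
  have hslope := (hf.comp_affineMap ℓ).le_slope_of_hasDerivAt (x := 0) (y := 1)
    (by simpa [ℓ] using hy) (by simpa [ℓ] using hz) one_pos hderiv
  simp only [slope_def_field, Function.comp_apply, ℓ, AffineMap.lineMap_apply_zero,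
    AffineMap.lineMap_apply_one, sub_zero, div_one] at hslope
  linarith

end Convexity

section Gradient

variable {F : Type*} [NormedAddCommGroup F] [InnerProductSpace ℝ F] [CompleteSpace F]
  {f : F → ℝ} {G y : F} {μ : ℝ}

theorem add_inner_sub_norm_sq_le_of_convexOn
    (hf : ConvexOn ℝ Set.univ fun y => f y + ‖y‖ ^ 2 / (2 * μ)) (hG : HasGradientAt f G y) (z : F) :
    f y + ⟪G, z - y⟫ - ‖z - y‖ ^ 2 / (2 * μ) ≤ f z := by
  have hderiv := hG.hasFDerivAt.add
    ((hasStrictFDerivAt_norm_sq y).hasFDerivAt.const_mul (2 * μ)⁻¹)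
  simp only [div_eq_inv_mul] at hf ⊢
  have hle := add_fderiv_sub_le_of_convexOn hf (Set.mem_univ y) (Set.mem_univ z) hderiv
  simp only [add_apply, InnerProductSpace.toDual_apply_apply,
    smul_apply, innerSL_apply_apply, smul_eq_mul, nsmul_eq_mul,
    Nat.cast_ofNat] at hle
  have hexpand : ‖z‖ ^ 2 = ‖y‖ ^ 2 + 2 * ⟪y, z - y⟫ + ‖z - y‖ ^ 2 := by
    rw [← norm_add_sq_real, add_sub_cancel]
  rw [hexpand] at hle
  linarith

theorem mul_norm_sub_gradient_sq_le {r : F} {ξ : ℝ} (hμ : 0 < μ)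
    (hf : ConvexOn ℝ Set.univ fun y => f y + ‖y‖ ^ 2 / (2 * μ)) (hG : HasGradientAt f G y)
    (hr : ∀ z, f z ≤ f y + ⟪r, z - y⟫ + ξ) : μ * ‖r - G‖ ^ 2 ≤ 2 * ξ := by
  have hbounds (d : F) : ⟪G, d⟫ - ‖d‖ ^ 2 / (2 * μ) ≤ ⟪r, d⟫ + ξ := by
    have hlower := add_inner_sub_norm_sq_le_of_convexOn hf hG (y + d)
    have hupper := hr (y + d)
    rw [add_sub_cancel_left] at hlower hupper
    linarith
  have hinner : ⟪r, -(μ • (r - G))⟫ - ⟪G, -(μ • (r - G))⟫ = -(μ * ‖r - G‖ ^ 2) := by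
    rw [← inner_sub_left, inner_neg_right, real_inner_smul_right, real_inner_self_eq_norm_sq]
  have hnorm : ‖-(μ • (r - G))‖ ^ 2 / (2 * μ) = μ * ‖r - G‖ ^ 2 / 2 := by
    rw [norm_neg, norm_smul, Real.norm_of_nonneg hμ.le]
    field_simp
  linarith [hbounds (-(μ • (r - G)))]

end Gradient

section PenaltyLagrangian

variable {E F : Type*} [AddCommGroup E] [Module ℝ E] [NormedAddCommGroup F] [InnerProductSpace ℝ F]

/-- The penalty Lagrangian `L_μ(x, y)` of `Lpen`, for a linear map from a real vector space into a
real inner product space. -/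
noncomputable def penaltyLagrangian (A : E →ₗ[ℝ] F) (b : F) (K : Set F) (p : E → ℝ) (μ : ℝ)
    (x : E) (y : F) : ℝ :=
  p x + μ / 2 * infDist (A x - b - μ⁻¹ • y) K ^ 2 - ‖y‖ ^ 2 / (2 * μ)

/-- The penalty dual function `g_μ(y) = inf_{x ∈ χ} L_μ(x, y)` of `gmu`, in the generality of
`penaltyLagrangian`. Where the infimum is `-∞`, the real `sInf` gives the junk value `0`. -/
noncomputable def penaltyDual (A : E →ₗ[ℝ] F) (b : F) (K : Set F) (χ : Set E) (p : E → ℝ) (μ : ℝ)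
    (y : F) : ℝ :=
  sInf ((fun x => penaltyLagrangian A b K p μ x y) '' χ)

variable {A : E →ₗ[ℝ] F} {b : F} {K : Set F} {χ : Set E} {p : E → ℝ} {μ : ℝ}

theorem mul_norm_sub_smul_sub_sq_sub_norm_sq_div (hμ : μ ≠ 0) (v s y : F) :
    μ / 2 * ‖v - μ⁻¹ • y - s‖ ^ 2 - ‖y‖ ^ 2 / (2 * μ) = μ / 2 * ‖s - v‖ ^ 2 + ⟪s - v, y⟫ := by
  have hneg : v - μ⁻¹ • y - s = -(s - v + μ⁻¹ • y) := by abel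
  rw [hneg, norm_neg, norm_add_sq_real, real_inner_smul_right, norm_smul, mul_pow,
    Real.norm_eq_abs, sq_abs]
  field_simp
  ring

theorem penaltyLagrangian_le_add_inner (hμ : 0 < μ) {x : E} {y P : F} (hP : P ∈ K)
    (hPmin : ∀ s ∈ K, ‖A x - b - μ⁻¹ • y - P‖ ≤ ‖A x - b - μ⁻¹ • y - s‖) (z : F) :
    penaltyLagrangian A b K p μ x z ≤
      penaltyLagrangian A b K p μ x y + ⟪P - (A x - b), z - y⟫ := by
  have hz : infDist (A x - b - μ⁻¹ • z) K ≤ ‖A x - b - μ⁻¹ • z - P‖ :=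
    (infDist_le_dist_of_mem hP).trans_eq (dist_eq_norm _ _)
  have hy : ‖A x - b - μ⁻¹ • y - P‖ ≤ infDist (A x - b - μ⁻¹ • y) K :=
    (le_infDist ⟨P, hP⟩).2 fun s hs => (hPmin s hs).trans_eq (dist_eq_norm _ _).symm
  calc penaltyLagrangian A b K p μ x z
      ≤ p x + μ / 2 * ‖A x - b - μ⁻¹ • z - P‖ ^ 2 - ‖z‖ ^ 2 / (2 * μ) := by
        unfold penaltyLagrangian
        gcongr
        exact infDist_nonneg
    _ = p x + μ / 2 * ‖A x - b - μ⁻¹ • y - P‖ ^ 2 - ‖y‖ ^ 2 / (2 * μ)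
          + ⟪P - (A x - b), z - y⟫ := by
        rw [inner_sub_right]
        linear_combination mul_norm_sub_smul_sub_sq_sub_norm_sq_div hμ.ne' (A x - b) P z -
          mul_norm_sub_smul_sub_sq_sub_norm_sq_div hμ.ne' (A x - b) P y
    _ ≤ penaltyLagrangian A b K p μ x y + ⟪P - (A x - b), z - y⟫ := by
        unfold penaltyLagrangian
        gcongr

theorem convexOn_penaltyLagrangian_add_norm_sq (hμ : 0 ≤ μ) (hK : Convex ℝ K)
    (hp : ConvexOn ℝ χ p) :
    ConvexOn ℝ (χ ×ˢ Set.univ) fun q : E × F =>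
      penaltyLagrangian A b K p μ q.1 q.2 + ‖q.2‖ ^ 2 / (2 * μ) := by
  have hdomain : Convex ℝ (χ ×ˢ (Set.univ : Set F)) := hp.1.prod convex_univ
  have hobjective : ConvexOn ℝ (χ ×ˢ Set.univ) fun q : E × F => p q.1 :=
    (hp.comp_linearMap (LinearMap.fst ℝ E F)).subset (fun _ hq => hq.1) hdomain
  have hdist : ConvexOn ℝ (χ ×ˢ Set.univ) fun q : E × F =>
      infDist (A q.1 - b - μ⁻¹ • q.2) K := by
    let residual : E × F →ᵃ[ℝ] F :=
      (A.comp (LinearMap.fst ℝ E F) - μ⁻¹ • LinearMap.snd ℝ E F).toAffineMap -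
        AffineMap.const ℝ (E × F) b
    refine (((convexOn_univ_infDist hK).comp_affineMap residual).subset
      (Set.subset_univ _) hdomain).congr fun q _ => ?_
    simp [residual, sub_right_comm]
  refine (hobjective.add ((hdist.pow (fun _ _ => infDist_nonneg) 2).smul
    (div_nonneg hμ zero_le_two))).congr fun q _ => ?_
  simp [penaltyLagrangian]

theorem convexOn_penaltyDual_add_norm_sq (hμ : 0 ≤ μ) (hK : Convex ℝ K) (hχ : χ.Nonempty)
    (hp : ConvexOn ℝ χ p)
    (hbdd : ∀ y, BddBelow ((fun x => penaltyLagrangian A b K p μ x y) '' χ)) :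
    ConvexOn ℝ Set.univ fun y => penaltyDual A b K χ p μ y + ‖y‖ ^ 2 / (2 * μ) := by
  have himage (y : F) : (fun x => penaltyLagrangian A b K p μ x y + ‖y‖ ^ 2 / (2 * μ)) '' χ =
      OrderIso.addRight (‖y‖ ^ 2 / (2 * μ)) ''
        ((fun x => penaltyLagrangian A b K p μ x y) '' χ) := by
    rw [Set.image_image]
    rfl
  refine (convexOn_sInf_image_left
    (φ := fun x y => penaltyLagrangian A b K p μ x y + ‖y‖ ^ 2 / (2 * μ))
    (convexOn_penaltyLagrangian_add_norm_sq hμ hK hp) hχ fun y _ => ?_).congr fun y _ => ?_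
  · rw [himage]
    exact (OrderIso.addRight _).monotone.map_bddBelow (hbdd y)
  · simp only [himage]
    exact ((OrderIso.addRight _).map_csInf' (hχ.image _) (hbdd y)).symm

theorem bddBelow_image_penaltyLagrangian (hμ : 0 ≤ μ) (hp : BddBelow (p '' χ)) (y : F) :
    BddBelow ((fun x => penaltyLagrangian A b K p μ x y) '' χ) := by
  obtain ⟨c, hc⟩ := hp
  refine ⟨c - ‖y‖ ^ 2 / (2 * μ), Set.forall_mem_image.2 fun x hx => ?_⟩
  have hcx : c ≤ p x := hc ⟨x, hx, rfl⟩
  have hpenalty : 0 ≤ μ / 2 * infDist (A x - b - μ⁻¹ • y) K ^ 2 := by positivity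
  unfold penaltyLagrangian
  linarith

theorem stmt_9_general [CompleteSpace F] (hK : Convex ℝ K) (hp : ConvexOn ℝ χ p) (hμ : 0 < μ)
    (hbdd : ∀ y, BddBelow ((fun x => penaltyLagrangian A b K p μ x y) '' χ))
    {x : E} (hx : x ∈ χ) {y : F} {ξ : ℝ}
    (hsubopt : penaltyLagrangian A b K p μ x y ≤ penaltyDual A b K χ p μ y + ξ)
    {P : F} (hP : P ∈ K) (hPmin : ∀ s ∈ K, ‖A x - b - μ⁻¹ • y - P‖ ≤ ‖A x - b - μ⁻¹ • y - s‖)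
    {G : F} (hG : HasGradientAt (penaltyDual A b K χ p μ) G y) :
    μ * ‖P - (A x - b) - G‖ ^ 2 ≤ 2 * ξ := by
  refine mul_norm_sub_gradient_sq_le hμ
    (convexOn_penaltyDual_add_norm_sq hμ.le hK ⟨x, hx⟩ hp hbdd) hG fun z => ?_
  calc penaltyDual A b K χ p μ z
      ≤ penaltyLagrangian A b K p μ x z := csInf_le (hbdd z) ⟨x, hx, rfl⟩
    _ ≤ penaltyLagrangian A b K p μ x y + ⟪P - (A x - b), z - y⟫ :=
        penaltyLagrangian_le_add_inner hμ hP hPmin z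
    _ ≤ penaltyDual A b K χ p μ y + ⟪P - (A x - b), z - y⟫ + ξ := by linarith

end PenaltyLagrangian

/-- under Assumption 1, fix `μ > 0`, `ȳ` and `ξ ≥ 0`. If `x̄ ∈ χ` satisfies
`L_μ(x̄, ȳ) ≤ g_μ(ȳ) + ξ`, then
`μ·‖(Π_K(Ax̄ - b - ȳ/μ) - (Ax̄ - b)) - ∇g_μ(ȳ)‖² ≤ 2ξ`, where
`Π_K(Ax̄ - b - ȳ/μ) - (Ax̄ - b)` is the gradient of `y ↦ L_μ(x̄, y)` at `ȳ` and
`∇g_μ(ȳ)` the gradient of `g_μ` at `ȳ`. -/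
theorem stmt_9 {n m : ℕ} (K : Set (EuclideanSpace ℝ (Fin m)))
    (hKne : K.Nonempty) (hKcl : IsClosed K) (hKcv : Convex ℝ K)
    (hKcone : ∀ (c : ℝ), 0 ≤ c → ∀ x ∈ K, c • x ∈ K)
    (A : EuclideanSpace ℝ (Fin n) →L[ℝ] EuclideanSpace ℝ (Fin m))
    (b : EuclideanSpace ℝ (Fin m))
    (χ : Set (EuclideanSpace ℝ (Fin n)))
    (hχne : χ.Nonempty) (hχcp : IsCompact χ) (hχcv : Convex ℝ χ)
    (p : EuclideanSpace ℝ (Fin n) → ℝ) (hp : ConvexOn ℝ Set.univ p)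
    (hfeas : {x ∈ χ | A x - b ∈ K}.Nonempty)
    (hKKT : ∃ ystar ∈ dualCone K, gzero A b χ p ystar = pstar A b K χ p)
    (μ : ℝ) (hμ : 0 < μ) (ybar : EuclideanSpace ℝ (Fin m)) (ξ : ℝ) (hξ : 0 ≤ ξ)
    (xbar : EuclideanSpace ℝ (Fin n)) (hxbar : xbar ∈ χ)
    (hsubopt : Lpen A b K p μ xbar ybar ≤ gmu A b K χ p μ ybar + ξ)
    -- `Pw` is the Euclidean projection of `A x̄ - b - ȳ/μ` onto `K`
    (Pw : EuclideanSpace ℝ (Fin m)) (hPwK : Pw ∈ K)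
    (hPw : ∀ s ∈ K, ‖(A xbar - b - μ⁻¹ • ybar) - Pw‖ ≤ ‖(A xbar - b - μ⁻¹ • ybar) - s‖)
    -- `Gy` is the gradient of `g_μ` at `ȳ` (it exists by Theorem 1 under Assumption 1)
    (Gy : EuclideanSpace ℝ (Fin m))
    (hGy : HasGradientAt (gmu A b K χ p μ) Gy ybar) :
    μ * ‖(Pw - (A xbar - b)) - Gy‖ ^ 2 ≤ 2 * ξ := by
  have hpbdd : BddBelow (p '' χ) :=
    hχcp.bddBelow_image ((hp.continuousOn isOpen_univ).mono χ.subset_univ)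
  exact stmt_9_general (A := A.toLinearMap) hKcv (hp.subset χ.subset_univ hχcv) hμ
    (bddBelow_image_penaltyLagrangian hμ.le hpbdd) hxbar hsubopt hPwK hPw hGy
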